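/- Let X be a finite symmetric subset of D^k, let d be a positive integer with d ≤ k, and let f : X → ℂ be a symmetric function, i.e. f(τ∘x) = f(x) for all x ∈ X and τ ∈ S_k (so that f induces a well-defined value f(M) on each multiset M ∈ M(X)). Then k!·Σ_{M ∈ M̄_d(X)} f(M) = Σ_{τ ∈ S_k} w̄_d(τ)·Σ_{x ∈ X_τ} f(x). -/

import Mathlib

/-- The multiset `[x_1, …, x_k]` associated to a tuple `(x_1, …, x_k)`. -/
def msetOf {D : Type*} {k : ℕ} (x : Fin k → D) : Multiset D :=
  (List.ofFn x : Multiset D)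

/-- The cycle lengths of a permutation of `Fin k`, with fixed points counted
as cycles of length 1. -/
def fullCycleType {k : ℕ} (τ : Equiv.Perm (Fin k)) : Multiset ℕ :=
  τ.cycleType + Multiset.replicate (k - τ.support.card) 1

/-- The weight `w̄_d(τ)`: the coefficient of `x^d` in `∏_i (1 - (1-x)^{ℓ_i})`,
the product taken over the cycle lengths `ℓ_i` of `τ`. -/
noncomputable def wbar {k : ℕ} (d : ℕ) (τ : Equiv.Perm (Fin k)) : ℤ :=
  (((fullCycleType τ).map fun ℓ =>
    (1 - (1 - Polynomial.X) ^ ℓ : Polynomial ℤ)).prod).coeff d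

/-- `M(X)`: the set of `k`-multisets `[x_1,…,x_k]` for `(x_1,…,x_k) ∈ X`. -/
def MX {D : Type*} [DecidableEq D] {k : ℕ} (X : Finset (Fin k → D)) : Finset (Multiset D) :=
  X.image msetOf

/-- `M̄_d(X)`: multisets in `M(X)` with exactly `d` distinct elements. -/
def Mbar {D : Type*} [DecidableEq D] {k : ℕ} (d : ℕ) (X : Finset (Fin k → D)) :
    Finset (Multiset D) :=
  (MX X).filter fun m => m.toFinset.card = d

/-!
Let `P_τ` be the permutation matrix of `τ`. Then `det (1 - y P_τ) = ∏ (1 - y ^ ℓ)` over the cycle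
lengths `ℓ` of `τ`, so `wbar d τ` is the coefficient of `X ^ d` at `y = 1 - X`, and it is enough to
show that, for a tuple `x` with `n` distinct entries,
`∑ τ ∈ Stab x, det (1 - y P_τ) = |Stab x| (1 - y) ^ n`: the orbit-stabilizer theorem then counts
each multiset `k!` times.

To see this identity, expand the determinants multilinearly over the sets `A` of rows taken from
`-y P_τ`. If two indices `a, b ∈ A` have the same entry `x a = x b`, the terms of `τ` and
`τ * swap a b` differ by an exchange of two rows and cancel. If `x` is injective on `A`, then `τ`
maps an index in `A` to itself or outside `A`, and the determinant is `(-y) ^ |A|` when `τ` fixes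
`A` pointwise and zero otherwise. As `Stab x` acts transitively on the sets `A` that `x` maps
bijectively onto a given `B`, each set `B` of entries of `x` contributes `|Stab x| (-y) ^ |B|`.
-/

section PermutationDeterminants

open Equiv Finset Matrix

variable {α D : Type*}

lemma eq_one_or_eq_of_isCycle [Finite α] {σ ρ : Perm α} (hσ : σ.IsCycle)
    (hρ : ∀ i, ρ i = i ∨ ρ i = σ i) : ρ = 1 ∨ ρ = σ := by
  refine or_iff_not_imp_left.2 fun hne => ?_
  obtain ⟨a, ha⟩ : ∃ a, ρ a ≠ a := by
    by_contra! h
    exact hne (Perm.ext h)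
  have haσ : ρ a = σ a := (hρ a).resolve_left ha
  have agree_step : ∀ i, σ i ≠ i → ρ i = σ i → ρ (σ i) = σ (σ i) := fun i hi h =>
    (hρ (σ i)).resolve_left fun h' => hi (ρ.injective (h'.trans h.symm))
  have agree_pow : ∀ n : ℕ, ρ ((σ ^ n) a) = σ ((σ ^ n) a) := fun n => by
    induction n with
    | zero => exact haσ
    | succ n ih =>
      rw [pow_succ', Perm.mul_apply]
      refine agree_step _ (fun h => ?_) ih
      rw [← Perm.mul_apply, ← pow_succ', pow_succ, Perm.mul_apply] at h
      exact ha (haσ.trans ((σ ^ n).injective h))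
  refine Perm.ext fun j => ?_
  by_cases hj : σ j = j
  · exact (hρ j).elim (fun h => h.trans hj.symm) id
  · obtain ⟨n, rfl⟩ := hσ.exists_pow_eq (haσ ▸ ha) hj
    exact agree_pow n

variable [DecidableEq α] {R : Type*} [CommRing R]

/-- The permutation matrix of `σ` with the rows of the fixed points of `σ` replaced by zero. Unlike
the permutation matrices themselves, these matrices add up, and annihilate each other, when the
permutations are disjoint, which makes `1 - y • movedPermMatrix R σ` multiplicative in `σ`. -/
def movedPermMatrix (R : Type*) [Zero R] [One R] (σ : Perm α) : Matrix α α R :=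
  of fun i j => if σ i = j ∧ σ i ≠ i then 1 else 0

lemma movedPermMatrix_mul_of_disjoint {σ τ : Perm α} (h : σ.Disjoint τ) :
    movedPermMatrix R (σ * τ) = movedPermMatrix R σ + movedPermMatrix R τ := by
  ext i j
  simp only [movedPermMatrix, of_apply, Matrix.add_apply, Perm.mul_apply]
  rcases h i with hi | hi
  · by_cases hτ : τ i = i
    · simp [hi, hτ]
    · have : σ (τ i) = τ i := (h (τ i)).resolve_right fun h' => hτ (τ.injective h')
      simp [hi, this]
  · simp [hi]

variable [Fintype α]

lemma movedPermMatrix_mul_movedPermMatrix_of_disjoint {σ τ : Perm α} (h : σ.Disjoint τ) :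
    movedPermMatrix R σ * movedPermMatrix R τ = 0 := by
  ext i j
  simp only [movedPermMatrix, mul_apply, of_apply, Matrix.zero_apply]
  refine sum_eq_zero fun l _ => ?_
  by_cases hi : σ i = l ∧ σ i ≠ i
  · obtain ⟨rfl, hi⟩ := hi
    have hτ : τ (σ i) = σ i := (h (σ i)).resolve_left fun h' => hi (σ.injective h')
    simp [hτ]
  · simp [hi]

lemma one_sub_smul_movedPermMatrix_mul_of_disjoint (y : R) {σ τ : Perm α} (h : σ.Disjoint τ) :
    1 - y • movedPermMatrix R (σ * τ) =
      (1 - y • movedPermMatrix R σ) * (1 - y • movedPermMatrix R τ) := by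
  rw [movedPermMatrix_mul_of_disjoint h, sub_mul, mul_sub, mul_sub, smul_mul_smul_comm,
    movedPermMatrix_mul_movedPermMatrix_of_disjoint h]
  simp only [mul_one, one_mul, smul_zero, sub_zero, smul_add]
  abel

lemma det_one_sub_smul_movedPermMatrix_of_isCycle (y : R) {σ : Perm α} (hσ : σ.IsCycle) :
    (1 - y • movedPermMatrix R σ).det = 1 - y ^ #σ.support := by
  have entry_id : ∀ i, (1 - y • movedPermMatrix R σ) i i = 1 := fun i => by
    simp [movedPermMatrix]
  have entry_σ : ∀ i, (1 - y • movedPermMatrix R σ) i (σ i) = if i ∈ σ.support then -y else 1 :=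
    fun i => by by_cases hi : σ i = i <;> simp [movedPermMatrix, hi, eq_comm (a := i)]
  have entry_zero : ∀ i j, j ≠ i → j ≠ σ i → (1 - y • movedPermMatrix R σ) i j = 0 :=
    fun i j hi hσi => by simp [movedPermMatrix, hi.symm, hσi.symm]
  rw [← det_transpose, det_apply', Fintype.sum_eq_add 1 σ hσ.ne_one.symm]
  · simp_rw [transpose_apply, Perm.one_apply, entry_id, entry_σ, prod_ite_mem, univ_inter, hσ.sign]
    push_cast [Perm.sign_one, prod_const]
    rw [neg_mul, ← mul_pow]
    simp [sub_eq_add_neg]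
  · rintro ρ ⟨hρ₁, hρσ⟩
    obtain ⟨i, hi⟩ : ∃ i, ρ i ≠ i ∧ ρ i ≠ σ i := by
      by_contra! h
      exact (eq_one_or_eq_of_isCycle hσ fun i => or_iff_not_imp_left.2 (h i)).elim hρ₁ hρσ
    exact mul_eq_zero_of_right _ (prod_eq_zero (mem_univ i) (entry_zero i _ hi.1 hi.2))

lemma det_one_sub_smul_movedPermMatrix (y : R) (σ : Perm α) :
    (1 - y • movedPermMatrix R σ).det = (σ.cycleType.map fun l => 1 - y ^ l).prod := by
  induction σ using Perm.cycle_induction_on with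
  | base_one =>
    have : movedPermMatrix R (1 : Perm α) = 0 := by ext; simp [movedPermMatrix]
    simp [this]
  | base_cycles σ hσ => simp [det_one_sub_smul_movedPermMatrix_of_isCycle y hσ, hσ.cycleType]
  | induction_disjoint σ τ h _ hσ hτ =>
    rw [one_sub_smul_movedPermMatrix_mul_of_disjoint y h, det_mul, hσ, hτ, h.cycleType_mul,
      Multiset.map_add, Multiset.prod_add]

lemma det_one_sub_smul_permMatrix (y : R) (σ : Perm α) :
    (1 - y • σ.permMatrix R).det = (σ.partition.parts.map fun l => 1 - y ^ l).prod := by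
  have hfactor : 1 - y • σ.permMatrix R =
      (diagonal fun i => if i ∈ σ.supportᶜ then 1 - y else 1) * (1 - y • movedPermMatrix R σ) := by
    ext i j
    rw [diagonal_mul]
    by_cases hi : σ i = i
    · rcases eq_or_ne i j with rfl | hij <;> simp [movedPermMatrix, *]
    · simp [movedPermMatrix, hi, Matrix.one_apply]
  rw [hfactor, det_mul, det_one_sub_smul_movedPermMatrix, det_diagonal, prod_ite_mem, univ_inter,
    prod_const, card_compl, Perm.parts_partition]
  simp [mul_comm]

/-- The matrix with the rows of `-y • σ.permMatrix R` at the indices in `A` and the rows of the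
identity matrix elsewhere. -/
def permRowsOn (y : R) (σ : Perm α) (A : Finset α) : Matrix α α R :=
  of (A.piecewise (fun i => -y • Pi.single (σ i) 1) fun i => Pi.single i 1)

lemma det_one_sub_smul_permMatrix_eq_sum_permRowsOn (y : R) (σ : Perm α) :
    (1 - y • σ.permMatrix R).det = ∑ A : Finset α, (permRowsOn y σ A).det := by
  have hrows : 1 - y • σ.permMatrix R =
      of ((fun i => -y • Pi.single (σ i) 1) + fun i => Pi.single i 1) := by
    ext i j
    simp [Matrix.one_apply, Pi.single_apply, eq_comm, sub_eq_neg_add]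
  rw [hrows]
  exact detRowAlternating.map_add_univ _ _

lemma det_permRowsOn_mul_swap (y : R) (σ : Perm α) {A : Finset α} {a b : α} (ha : a ∈ A)
    (hb : b ∈ A) (hab : a ≠ b) :
    (permRowsOn y (σ * swap a b) A).det = -(permRowsOn y σ A).det := by
  have hswap : permRowsOn y (σ * swap a b) A = (permRowsOn y σ A).submatrix (swap a b) id := by
    ext i j
    rcases eq_or_ne i a with rfl | hia
    · simp [permRowsOn, ha, hb]
    rcases eq_or_ne i b with rfl | hib
    · simp [permRowsOn, ha, hb]
    simp [permRowsOn, swap_apply_of_ne_of_ne hia hib, Finset.piecewise]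
  rw [hswap, det_permute, Perm.sign_swap hab]
  simp

lemma det_permRowsOn_of_forall_apply_eq (y : R) {σ : Perm α} {A : Finset α}
    (h : ∀ i ∈ A, σ i = i) : (permRowsOn y σ A).det = (-y) ^ #A := by
  have hdiag : permRowsOn y σ A = diagonal fun i => if i ∈ A then -y else 1 := by
    ext i j
    by_cases hi : i ∈ A
    · rcases eq_or_ne i j with rfl | hij <;> simp [permRowsOn, h i hi, *]
    · simp [permRowsOn, hi, diagonal_apply, Pi.single_apply, eq_comm]
  rw [hdiag, det_diagonal, prod_ite_mem, univ_inter, prod_const]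

lemma det_permRowsOn_of_apply_notMem (y : R) {σ : Perm α} {A : Finset α} {a : α} (ha : a ∈ A)
    (hσa : σ a ∉ A) : (permRowsOn y σ A).det = 0 := by
  have hne : σ a ≠ a := (ne_of_mem_of_not_mem ha hσa).symm
  have hrow : permRowsOn y σ A =
      (permRowsOn y σ A).updateRow a (-y • (permRowsOn y σ A).row (σ a)) := by
    ext i j
    rcases eq_or_ne i a with rfl | hia
    · simp [permRowsOn, ha, hσa]
    · simp [hia]
  rw [hrow, det_updateRow_smul]
  exact mul_eq_zero_of_right _ (det_updateRow_eq_zero hne)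

lemma det_permRowsOn_of_injOn (y : R) {x : α → D} {σ : Perm α} (hσ : x ∘ σ = x) {A : Finset α}
    (hA : Set.InjOn x A) :
    (permRowsOn y σ A).det = if ∀ i ∈ A, σ i = i then (-y) ^ #A else 0 := by
  split_ifs with hfix
  · exact det_permRowsOn_of_forall_apply_eq y hfix
  · push Not at hfix
    obtain ⟨a, ha, hne⟩ := hfix
    exact det_permRowsOn_of_apply_notMem y ha fun hσa => hne (hA hσa ha (congrFun hσ a))

end PermutationDeterminants

section Stabilizer

open Equiv Finset

variable {α D : Type*}

lemma image_eq_self_iff_of_injOn [DecidableEq α] {x : α → D} {σ : Perm α}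
    (hσ : x ∘ σ = x) {A : Finset α} (hA : Set.InjOn x A) : A.image σ = A ↔ ∀ i ∈ A, σ i = i := by
  refine ⟨fun h i hi => hA ?_ hi (congrFun hσ i), fun h => ?_⟩
  · exact mem_coe.2 (h ▸ mem_image_of_mem σ hi)
  · rw [image_congr h, image_id']

lemma exists_perm_comp_eq_of_map_univ_eq [Fintype α] {x y : α → D}
    (h : univ.val.map x = univ.val.map y) : ∃ σ : Perm α, x ∘ σ = y := by
  classical
  have hcount : ∀ (z : α → D) (c : D),
      (univ.val.map z).count c = Fintype.card {i // z i = c} := fun z c => by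
    rw [Multiset.count_map, Fintype.card_subtype]
    simp [Finset.card_def, eq_comm]
  have hfiber : ∀ c, Nonempty ({i // y i = c} ≃ {i // x i = c}) := fun c =>
    Fintype.card_eq.1 (by rw [← hcount, ← hcount, h])
  exact ⟨Equiv.ofFiberEquiv fun c => (hfiber c).some,
    funext (Equiv.ofFiberEquiv_map fun c => (hfiber c).some)⟩

lemma exists_perm_comp_eq_self_of_map_eq [Finite α] {x : α → D} {A B : Finset α}
    (h : A.val.map x = B.val.map x) :
    ∃ σ : Perm α, x ∘ σ = x ∧ ∀ i, σ i ∈ B ↔ i ∈ A := by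
  classical
  have := Fintype.ofFinite α
  have huniv : ∀ C : Finset α, univ.val = C.val + Cᶜ.val := fun C => by
    rw [← union_compl C, ← disjUnion_eq_union _ _ disjoint_compl_right, disjUnion_val]
  have hsplit : ∀ C : Finset α, univ.val.map (fun i => (x i, decide (i ∈ C))) =
      (C.val.map x).map (·, true) + (Cᶜ.val.map x).map (·, false) := fun C => by
    rw [huniv C, Multiset.map_add, Multiset.map_map, Multiset.map_map]
    congr 1 <;> exact Multiset.map_congr rfl fun i hi => by simp_all
  have hcompl : Aᶜ.val.map x = Bᶜ.val.map x := by
    have htotal := congrArg (Multiset.map x) ((huniv A).symm.trans (huniv B))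
    rw [Multiset.map_add, Multiset.map_add, h] at htotal
    exact add_left_cancel htotal
  obtain ⟨σ, hσ⟩ := exists_perm_comp_eq_of_map_univ_eq
    ((hsplit B).trans (by rw [hsplit A, h, hcompl]) :
      univ.val.map (fun i => (x i, decide (i ∈ B))) = univ.val.map fun i => (x i, decide (i ∈ A)))
  simp only [funext_iff, Function.comp_apply, Prod.mk.injEq, decide_eq_decide] at hσ
  exact ⟨σ, funext fun i => (hσ i).1, fun i => (hσ i).2⟩

variable [Fintype α] [DecidableEq D]

/-- The sets of representatives for the fibres of `x` over the points of `B`: the subsets of `α`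
that `x` maps bijectively onto `B`. -/
def transversals (x : α → D) (B : Finset D) : Finset (Finset α) :=
  {A | A.image x = B ∧ #A = #B}

lemma mem_transversals {x : α → D} {A : Finset α} {B : Finset D} :
    A ∈ transversals x B ↔ A.image x = B ∧ Set.InjOn x A := by
  rw [transversals, mem_filter_univ, ← card_image_iff]
  exact and_congr_right fun h => by rw [h, eq_comm]

lemma transversals_nonempty {x : α → D} {B : Finset D} (hB : B ⊆ univ.image x) :
    (transversals x B).Nonempty := by
  have hsurj : Set.SurjOn x Set.univ B := fun b hb => by simpa using hB hb
  obtain ⟨A, -, hinj, himage⟩ := exists_subset_injOn_image_eq_of_surjOn Set.univ B hsurj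
  exact ⟨A, mem_transversals.2 ⟨himage, hinj⟩⟩

variable [DecidableEq α]

lemma image_mem_transversals {x : α → D} {A : Finset α} {B : Finset D} {σ : Perm α}
    (hσ : x ∘ σ = x) (hA : A ∈ transversals x B) : A.image σ ∈ transversals x B := by
  rw [transversals, mem_filter_univ] at hA ⊢
  rwa [image_image, hσ, card_image_of_injective _ σ.injective]

lemma exists_perm_image_eq_of_mem_transversals {x : α → D} {A A' : Finset α} {B : Finset D}
    (hA : A ∈ transversals x B) (hA' : A' ∈ transversals x B) :
    ∃ σ : Perm α, x ∘ σ = x ∧ A.image σ = A' := by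
  rw [mem_transversals] at hA hA'
  obtain ⟨σ, hσ, hmem⟩ := exists_perm_comp_eq_self_of_map_eq (x := x) (A := A) (B := A') <| by
    rw [← image_val_of_injOn hA.2, ← image_val_of_injOn hA'.2, hA.1, hA'.1]
  refine ⟨σ, hσ, ext fun j => ?_⟩
  rw [← σ.apply_symm_apply j, hmem, σ.injective.mem_finset_image]

/-- The permutations under which `x` is invariant, i.e. those preserving each fibre of `x`: the
stabilizer of `x`, as a finset to sum over. -/
def stabilizerPerms (x : α → D) : Finset (Perm α) :=
  {σ | x ∘ σ = x}

lemma mem_stabilizerPerms {x : α → D} {σ : Perm α} : σ ∈ stabilizerPerms x ↔ x ∘ σ = x :=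
  mem_filter_univ σ

lemma mul_mem_stabilizerPerms_iff {x : α → D} {σ π : Perm α} (hπ : x ∘ π = x) :
    σ * π ∈ stabilizerPerms x ↔ σ ∈ stabilizerPerms x := by
  rw [mem_stabilizerPerms, mem_stabilizerPerms, Perm.coe_mul, ← Function.comp_assoc]
  nth_rewrite 2 [← hπ]
  exact π.surjective.right_cancellable

/-- Orbit counting: the stabilizer of `x` acts transitively on the transversals over `B`. -/
lemma sum_card_fixing_transversals {x : α → D} {B : Finset D} (hB : B ⊆ univ.image x) :
    ∑ A ∈ transversals x B, #{σ ∈ stabilizerPerms x | ∀ i ∈ A, σ i = i} =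
      #(stabilizerPerms x) := by
  obtain ⟨A₀, hA₀⟩ := transversals_nonempty hB
  rw [card_eq_sum_card_fiberwise (f := fun σ : Perm α => A₀.image σ) (t := transversals x B)
    fun σ hσ => image_mem_transversals (mem_stabilizerPerms.1 hσ) hA₀]
  refine sum_congr rfl fun A hA => ?_
  obtain ⟨π, hπ, rfl⟩ := exists_perm_image_eq_of_mem_transversals hA₀ hA
  refine card_equiv (Equiv.mulRight π) fun σ => ?_
  rw [mem_filter, mem_filter, Equiv.coe_mulRight, mul_mem_stabilizerPerms_iff hπ]
  refine and_congr_right fun hσ => ?_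
  rw [Perm.coe_mul, ← image_image, image_eq_self_iff_of_injOn (mem_stabilizerPerms.1 hσ)
    (mem_transversals.1 hA).2]

variable {R : Type*} [CommRing R]

lemma sum_det_permRowsOn_of_not_injOn (y : R) {x : α → D} {A : Finset α}
    (hA : ¬ Set.InjOn x A) : ∑ σ ∈ stabilizerPerms x, (permRowsOn y σ A).det = 0 := by
  simp only [Set.InjOn, not_forall] at hA
  obtain ⟨a, ha, b, hb, hxab, hab⟩ := hA
  have hswap : x ∘ swap a b = x := by
    rw [comp_swap_eq_update]
    simp [hxab]
  refine sum_involution (fun σ _ => σ * swap a b) ?_ ?_ ?_ ?_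
  · intro σ _
    rw [det_permRowsOn_mul_swap y σ ha hb hab, add_neg_cancel]
  · intro σ _ _
    simpa using hab
  · intro σ hσ
    exact (mul_mem_stabilizerPerms_iff hswap).2 hσ
  · simp [mul_assoc]

lemma sum_det_permRowsOn_of_injOn (y : R) {x : α → D} {A : Finset α} (hA : Set.InjOn x A) :
    ∑ σ ∈ stabilizerPerms x, (permRowsOn y σ A).det =
      (-y) ^ #A * #{σ ∈ stabilizerPerms x | ∀ i ∈ A, σ i = i} := by
  rw [sum_congr rfl fun σ hσ => det_permRowsOn_of_injOn y (mem_stabilizerPerms.1 hσ) hA,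
    ← sum_filter, sum_const, nsmul_eq_mul, mul_comm]

lemma sum_det_permRowsOn_of_image_eq (y : R) {x : α → D} {B : Finset D}
    (hB : B ⊆ univ.image x) :
    ∑ A with A.image x = B, ∑ σ ∈ stabilizerPerms x, (permRowsOn y σ A).det =
      (-y) ^ #B * #(stabilizerPerms x) := by
  have hsub : transversals x B ⊆ univ.filter (·.image x = B) := fun A hA =>
    (mem_filter_univ A).2 (mem_transversals.1 hA).1
  have hvanish : ∀ A ∈ univ.filter (·.image x = B), A ∉ transversals x B →
      ∑ σ ∈ stabilizerPerms x, (permRowsOn y σ A).det = 0 := fun A hA hA' =>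
    sum_det_permRowsOn_of_not_injOn y fun hinj =>
      hA' (mem_transversals.2 ⟨(mem_filter_univ A).1 hA, hinj⟩)
  rw [← sum_subset hsub hvanish, ← sum_card_fixing_transversals hB, Nat.cast_sum, mul_sum]
  refine sum_congr rfl fun A hA => ?_
  rw [sum_det_permRowsOn_of_injOn y (mem_transversals.1 hA).2, ((mem_filter_univ A).1 hA).2]

lemma sum_det_one_sub_smul_permMatrix_stabilizer (y : R) (x : α → D) :
    ∑ σ ∈ stabilizerPerms x, (1 - y • σ.permMatrix R).det =
      #(stabilizerPerms x) * (1 - y) ^ #(univ.image x) := by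
  simp_rw [det_one_sub_smul_permMatrix_eq_sum_permRowsOn]
  rw [sum_comm, ← sum_fiberwise_of_maps_to (t := (univ.image x).powerset)
      fun A _ => mem_powerset.2 (image_subset_image (subset_univ A)),
    sum_congr rfl fun B hB => sum_det_permRowsOn_of_image_eq y (mem_powerset.1 hB), ← sum_mul,
    mul_comm, sub_eq_neg_add, ← sum_pow_mul_eq_add_pow]
  simp only [one_pow, mul_one]

end Stabilizer

section Multisets

open Equiv Finset

variable {D : Type*} {k : ℕ}

lemma msetOf_eq_map_univ (x : Fin k → D) : msetOf x = univ.val.map x :=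
  (Fin.univ_val_map x).symm

lemma msetOf_comp_perm (x : Fin k → D) (τ : Perm (Fin k)) : msetOf (x ∘ τ) = msetOf x :=
  Multiset.coe_eq_coe.2 (τ.ofFn_comp_perm x)

lemma exists_comp_perm_eq_of_msetOf_eq {x y : Fin k → D} (h : msetOf x = msetOf y) :
    ∃ τ : Perm (Fin k), x ∘ τ = y :=
  exists_perm_comp_eq_of_map_univ_eq (by rwa [← msetOf_eq_map_univ, ← msetOf_eq_map_univ])

open Polynomial in
lemma wbar_eq_coeff_det (d : ℕ) (τ : Perm (Fin k)) :
    wbar d τ = (1 - (1 - X : ℤ[X]) • τ.permMatrix ℤ[X]).det.coeff d := by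
  rw [det_one_sub_smul_permMatrix, Perm.parts_partition, Fintype.card_fin, wbar, fullCycleType]

variable [DecidableEq D]

lemma toFinset_msetOf (x : Fin k → D) : (msetOf x).toFinset = univ.image x := by
  rw [msetOf_eq_map_univ, Finset.image]

lemma sum_wbar_stabilizer (d : ℕ) (x : Fin k → D) :
    ∑ τ ∈ stabilizerPerms x, wbar d τ =
      if #(msetOf x).toFinset = d then (#(stabilizerPerms x) : ℤ) else 0 := by
  simp_rw [wbar_eq_coeff_det]
  rw [← Polynomial.finsetSum_coeff, sum_det_one_sub_smul_permMatrix_stabilizer, sub_sub_cancel,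
    ← Polynomial.C_eq_natCast, Polynomial.coeff_C_mul, Polynomial.coeff_X_pow, toFinset_msetOf,
    mul_ite, mul_one, mul_zero]
  simp only [eq_comm]

/-- Orbit counting: the rearrangements of `x` form a single orbit of the symmetric group. -/
lemma sum_card_stabilizer_of_msetOf_eq {X : Finset (Fin k → D)}
    (hX : ∀ x ∈ X, ∀ τ : Perm (Fin k), x ∘ τ ∈ X) {x : Fin k → D} (hx : x ∈ X) :
    ∑ y ∈ X with msetOf y = msetOf x, #(stabilizerPerms y) = k.factorial := by
  have hcoset : ∀ y ∈ X.filter (msetOf · = msetOf x),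
      #(stabilizerPerms y) = #{τ : Perm (Fin k) | x ∘ τ = y} := by
    intro y hy
    obtain ⟨σ, rfl⟩ := exists_comp_perm_eq_of_msetOf_eq (mem_filter.1 hy).2.symm
    exact card_equiv (Equiv.mulLeft σ) fun τ => by
      simp only [mem_stabilizerPerms, mem_filter_univ, Equiv.coe_mulLeft, Perm.coe_mul,
        Function.comp_assoc]
  rw [sum_congr rfl hcoset, ← card_eq_sum_card_fiberwise, card_univ, Fintype.card_perm,
    Fintype.card_fin]
  intro τ _
  simp [hX x hx τ, msetOf_comp_perm]

lemma sum_card_stabilizer_smul {A : Type*} [AddCommMonoid A] (d : ℕ) {X : Finset (Fin k → D)}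
    (hX : ∀ x ∈ X, ∀ τ : Perm (Fin k), x ∘ τ ∈ X) (g : Multiset D → A) :
    ∑ x ∈ X with #(msetOf x).toFinset = d, #(stabilizerPerms x) • g (msetOf x) =
      k.factorial • ∑ m ∈ Mbar d X, g m := by
  have hmaps : ∀ x ∈ X.filter fun x => #(msetOf x).toFinset = d, msetOf x ∈ Mbar d X := fun x hx =>
    mem_filter.2 ⟨mem_image_of_mem _ (mem_filter.1 hx).1, (mem_filter.1 hx).2⟩
  rw [← sum_fiberwise_of_maps_to hmaps, smul_sum]
  refine sum_congr rfl fun m hm => ?_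
  obtain ⟨hmX, hmd⟩ := mem_filter.1 hm
  obtain ⟨x, hx, rfl⟩ := mem_image.1 hmX
  have hfiber : ({y ∈ X | #(msetOf y).toFinset = d} : Finset _).filter (msetOf · = msetOf x) =
      X.filter (msetOf · = msetOf x) := by
    rw [filter_filter]
    exact filter_congr fun y _ => and_iff_right_of_imp fun h => h ▸ hmd
  rw [hfiber, ← sum_card_stabilizer_of_msetOf_eq hX hx, sum_smul]
  exact sum_congr rfl fun y hy => by rw [(mem_filter.1 hy).2]

theorem weighted_multiset_sieve_distinct_general {A : Type*} [AddCommGroup A] (d : ℕ)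
    {X : Finset (Fin k → D)} (hX : ∀ x ∈ X, ∀ τ : Perm (Fin k), x ∘ τ ∈ X)
    (g : Multiset D → A) :
    k.factorial • ∑ m ∈ Mbar d X, g m =
      ∑ τ : Perm (Fin k), wbar d τ • ∑ x ∈ X with x ∘ τ = x, g (msetOf x) := by
  symm
  calc ∑ τ : Perm (Fin k), wbar d τ • ∑ x ∈ X with x ∘ τ = x, g (msetOf x)
      = ∑ x ∈ X, (∑ τ ∈ stabilizerPerms x, wbar d τ) • g (msetOf x) := by
        simp_rw [stabilizerPerms, sum_filter, smul_sum, sum_smul, smul_ite, ite_smul, smul_zero,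
          zero_smul]
        exact sum_comm
    _ = ∑ x ∈ X with #(msetOf x).toFinset = d,
          #(stabilizerPerms x) • g (msetOf x) := by
        simp_rw [sum_wbar_stabilizer, ite_smul, zero_smul, natCast_zsmul, sum_filter]
    _ = k.factorial • ∑ m ∈ Mbar d X, g m := sum_card_stabilizer_smul d hX g

end Multisets

/-- **Weighted multiset sieve, distinct-element version.**  If `X ⊆ D^k` is finite and
symmetric, `1 ≤ d ≤ k`, and `f : X → ℂ` is symmetric (hence induces a well-defined value
`g M` on each multiset `M ∈ M(X)`), then
`k!·Σ_{M ∈ M̄_d(X)} f(M) = Σ_{τ ∈ S_k} w̄_d(τ)·Σ_{x ∈ X_τ} f(x)`. -/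
theorem weighted_multiset_sieve_distinct {D : Type*} [DecidableEq D] (k d : ℕ)
    (hk : 0 < k) (hd : 0 < d) (hdk : d ≤ k) (X : Finset (Fin k → D))
    (hX : ∀ x ∈ X, ∀ τ : Equiv.Perm (Fin k), x ∘ τ ∈ X)
    (f : (Fin k → D) → ℂ)
    (hf : ∀ x ∈ X, ∀ τ : Equiv.Perm (Fin k), f (x ∘ τ) = f x)
    (g : Multiset D → ℂ)
    (hg : ∀ x ∈ X, g (msetOf x) = f x) :
    (Nat.factorial k : ℂ) * ∑ m ∈ Mbar d X, g m =
      ∑ τ : Equiv.Perm (Fin k), (wbar d τ : ℂ) *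
        ∑ x ∈ X.filter fun x => x ∘ τ = x, f x := by
  have hfg (τ : Equiv.Perm (Fin k)) :
      ∑ x ∈ X.filter fun x => x ∘ τ = x, g (msetOf x) = ∑ x ∈ X.filter fun x => x ∘ τ = x, f x :=
    Finset.sum_congr rfl fun x hx => hg x (Finset.mem_filter.1 hx).1
  simpa [hfg] using weighted_multiset_sieve_distinct_general d hX g
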